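/- arXiv:2405.04501 — 2 statements merged into one kernel-verified Lean document; each statement's English description precedes it below -/
import Mathlib

section
/- Let d ≥ 3 and m² ≥ 0. Then the integral ∫_{(0,1)^d} 1/(m² + 2 Σ_{k=1}^d (1 − cos(2π x_k))) dx is finite and n^{−d} Σ_{x ∈ {0,…,n−1}^d, x ≠ 0} 1/(m² + 2 Σ_{k=1}^d (1 − cos(2π x_k/n))) converges, as n → ∞, to ∫_{(0,1)^d} 1/(m² + 2 Σ_{k=1}^d (1 − cos(2π x_k))) dx; in particular for m² = 0 the limit equals β_c. -/
open MeasureTheory ProbabilityTheory Filter Topology Matrix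
open scoped Classical ENNReal

noncomputable section

/-- The massive lattice Green's function `G_{ℤ^d, m²}(x, y)`. -/
def massGreenZ (d : ℕ) (m2 : ℝ) (x y : Fin d → ℤ) : ℝ :=
  ∫ t in Set.Icc (0 : Fin d → ℝ) 1,
    Real.cos (2 * Real.pi * ∑ i, ((x i : ℝ) - (y i : ℝ)) * t i) /
      (m2 + 2 * ∑ i, (1 - Real.cos (2 * Real.pi * t i)))

/-- The lattice Green's function `G_{ℤ^d}(x, y)` (for `d ≥ 3`). -/
def greenZ (d : ℕ) (x y : Fin d → ℤ) : ℝ := massGreenZ d 0 x y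

/-- The critical inverse temperature `β_c = G_{ℤ^d}(0, 0)`. -/
def betaC (d : ℕ) : ℝ := greenZ d 0 0

/-- The eigenvalues `η_w = 2 ∑_i (1 − cos(2π w_i / n))` of the discrete Laplacian on the
torus `T_n^d`. -/
def eta (d n : ℕ) (w : Fin d → Fin n) : ℝ :=
  2 * ∑ i, (1 - Real.cos (2 * Real.pi * ((w i : ℕ) : ℝ) / n))

/-- The massive Green's function `G_{n,m²}(x,y)` on the torus `T_n^d`. -/
def torusGreen (d n : ℕ) (m2 : ℝ) (x y : Fin d → ZMod n) : ℝ :=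
  (1 / (n : ℝ) ^ d) * ∑ w : Fin d → Fin n,
    Real.cos (2 * Real.pi * (∑ i, ((w i : ℕ) : ℝ) * ((x i - y i).val : ℝ)) / n) /
      (m2 + eta d n w)

/-- The zero-average Green's function `G_n^0(x,y)` on the torus `T_n^d` (`d ≥ 3`). -/
def torusGreen0 (d n : ℕ) (x y : Fin d → ZMod n) : ℝ :=
  (1 / (n : ℝ) ^ d) *
    ∑ w ∈ Finset.univ.filter (fun w : Fin d → Fin n => ∃ i, (w i : ℕ) ≠ 0),
      Real.cos (2 * Real.pi * (∑ i, ((w i : ℕ) : ℝ) * ((x i - y i).val : ℝ)) / n) / eta d n w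

lemma aux_sin (x : ℝ) (h0 : 0 ≤ x) (h1 : x ≤ 1) :
    4 * (min x (1-x))^2 ≤ 2 * (1 - Real.cos (2 * Real.pi * x)) := by
  have hpi := Real.pi_pos
  have key : ∀ y : ℝ, 0 ≤ y → y ≤ 1/2 → 4 * y^2 ≤ 2 * (1 - Real.cos (2 * Real.pi * y)) := by
    intro y hy hy2
    have h := Real.mul_le_sin (x := Real.pi * y) (by positivity) (by nlinarith)
    have h2 : 2 / Real.pi * (Real.pi * y) = 2 * y := by field_simp
    rw [h2] at h
    have h3 : Real.cos (2 * Real.pi * y) = 1 - 2 * Real.sin (Real.pi * y)^2 := by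
      rw [mul_assoc, Real.cos_two_mul, Real.cos_sq']; ring
    rw [h3]
    nlinarith
  rcases le_total x (1-x) with h | h
  · rw [min_eq_left h]; exact key x h0 (by linarith)
  · rw [min_eq_right h]
    have := key (1-x) (by linarith) (by linarith)
    rwa [show 2 * Real.pi * (1-x) = 2 * Real.pi - 2 * Real.pi * x by ring,
      Real.cos_two_pi_sub] at this

/-- one-dimensional dominating function -/
noncomputable def hdom (d : ℕ) (t : ℝ) : ℝ := t ^ (-(2 / (d:ℝ))) + (1 - t) ^ (-(2 / (d:ℝ)))

lemma hdom_int (d : ℕ) (hd : 3 ≤ d) : IntegrableOn (hdom d) (Set.Ioo 0 1) := by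
  have hd' : (3:ℝ) ≤ d := by exact_mod_cast hd
  have hr : -1 < -(2 / (d:ℝ)) := by
    have : 2 / (d:ℝ) < 1 := by rw [div_lt_one (by linarith)]; linarith
    linarith
  have h1 : IntervalIntegrable (fun x : ℝ => x ^ (-(2 / (d:ℝ)))) volume 0 1 :=
    intervalIntegral.intervalIntegrable_rpow' hr
  have h2 := (h1.comp_sub_left 1).symm
  simp only [sub_zero, sub_self] at h2
  have h3 := h1.add h2
  exact ((intervalIntegrable_iff_integrableOn_Ioo_of_le zero_le_one).1 h3)

lemma hdom_prod_int (d : ℕ) (hd : 3 ≤ d) :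
    IntegrableOn (fun t : Fin d → ℝ => ∏ i, hdom d (t i))
      ((Set.univ : Set (Fin d)).pi fun _ => Set.Ioo (0 : ℝ) 1) volume := by
  unfold IntegrableOn
  rw [volume_pi, Measure.restrict_pi_pi]
  exact Integrable.fintype_prod (f := fun _ => hdom d) (fun _ => hdom_int d hd)

lemma dom_bound (d : ℕ) (hd : 3 ≤ d) (A : ℝ) (t : Fin d → ℝ)
    (ht : ∀ i, 0 < t i ∧ t i < 1) (hA : ∀ i, (min (t i) (1 - t i))^2 ≤ A) :
    1 / A ≤ ∏ i, hdom d (t i) := by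
  have hd' : (3:ℝ) ≤ d := by exact_mod_cast hd
  have hApos : 0 < A := by
    have h := ht ⟨0, by omega⟩
    have : 0 < min (t ⟨0, by omega⟩) (1 - t ⟨0, by omega⟩) := lt_min h.1 (by linarith [h.2])
    exact lt_of_lt_of_le (by positivity) (hA _)
  have h1 : 1 / A = ∏ i : Fin d, A ^ (-(1/(d:ℝ))) := by
    rw [Finset.prod_const, Finset.card_univ, Fintype.card_fin, ← Real.rpow_natCast,
      ← Real.rpow_mul hApos.le]
    rw [show -(1/(d:ℝ)) * d = -1 by field_simp, Real.rpow_neg_one, one_div]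
  rw [h1]
  apply Finset.prod_le_prod
  · intro i _; positivity
  · intro i _
    obtain ⟨h0, h2⟩ := ht i
    have h3 : 0 < 1 - t i := by linarith
    have hm : 0 < min (t i) (1 - t i) := lt_min h0 h3
    have e : A ^ (-(1/(d:ℝ))) ≤ (min (t i) (1 - t i)) ^ (-(2/(d:ℝ))) := by
      have := Real.rpow_le_rpow_of_nonpos (by positivity) (hA i)
        (show -(1/(d:ℝ)) ≤ 0 by simp)
      refine this.trans_eq ?_
      rw [← Real.rpow_natCast, ← Real.rpow_mul hm.le]
      congr 1; push_cast; ring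
    refine e.trans ?_
    unfold hdom
    have p1 : 0 < t i ^ (-(2 / (d:ℝ))) := by positivity
    have p2 : 0 < (1 - t i) ^ (-(2 / (d:ℝ))) := by positivity
    rcases min_choice (t i) (1 - t i) with h | h <;> rw [h] <;> linarith

lemma q_nonneg (x : ℝ) : 0 ≤ 1 - Real.cos x := by linarith [Real.cos_le_one x]

lemma single_le (d : ℕ) (m2 : ℝ) (hm2 : 0 ≤ m2) (u : Fin d → ℝ)
    (hu : ∀ i, 0 ≤ u i ∧ u i ≤ 1) (i : Fin d) :
    4 * (min (u i) (1 - u i))^2 ≤ m2 + 2 * ∑ j, (1 - Real.cos (2 * Real.pi * u j)) := by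
  have h1 := aux_sin (u i) (hu i).1 (hu i).2
  have h2 := Finset.single_le_sum (f := fun j => 1 - Real.cos (2 * Real.pi * u j))
    (fun j _ => q_nonneg _) (Finset.mem_univ i)
  linarith

lemma eta_eq (d n : ℕ) (w : Fin d → Fin n) :
    eta d n w = 2 * ∑ j, (1 - Real.cos (2 * Real.pi * (((w j : ℕ) : ℝ) / n))) := by
  unfold eta
  simp only [mul_div_assoc]

lemma cell_bound (d n : ℕ) (m2 : ℝ) (hm2 : 0 ≤ m2) (w : Fin d → Fin n)
    (hw : ∃ i, (w i : ℕ) ≠ 0) (t : Fin d → ℝ) (ht : ∀ i, 0 < t i ∧ t i < 1)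
    (hc : ∀ i, ((w i : ℕ) : ℝ) / n ≤ t i ∧ t i < (((w i : ℕ) : ℝ) + 1) / n) (i : Fin d) :
    (min (t i) (1 - t i))^2 ≤ m2 + eta d n w := by
  have hnpos : 0 < n := lt_of_le_of_lt (Nat.zero_le _) (w i).2
  have hn : (0:ℝ) < n := by exact_mod_cast hnpos
  have hu : ∀ i, 0 ≤ ((w i : ℕ) : ℝ) / n ∧ ((w i : ℕ) : ℝ) / n ≤ 1 := by
    intro i
    refine ⟨by positivity, ?_⟩
    rw [div_le_one hn]; exact_mod_cast (w i).2.le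
  have key := single_le d m2 hm2 (fun i => ((w i : ℕ) : ℝ) / n) hu
  rw [← eta_eq] at key
  obtain ⟨h0, h1⟩ := ht i
  obtain ⟨c0, c1⟩ := hc i
  have hmpos : 0 ≤ min (t i) (1 - t i) := le_min h0.le (by linarith)
  by_cases hwi : (w i : ℕ) = 0
  · obtain ⟨j, hj⟩ := hw
    have k := key j
    have a1 : 1 / (n:ℝ) ≤ ((w j : ℕ) : ℝ) / n := by
      gcongr; exact_mod_cast Nat.one_le_iff_ne_zero.2 hj
    have a2 : 1 / (n:ℝ) ≤ 1 - ((w j : ℕ) : ℝ) / n := by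
      have : ((w j : ℕ) : ℝ) + 1 ≤ n := by exact_mod_cast (w j).2
      have : (((w j : ℕ) : ℝ) + 1) / n ≤ 1 := by rwa [div_le_one hn]
      rw [add_div] at this; linarith
    have a3 := le_min a1 a2
    have a4 : min (t i) (1 - t i) ≤ 1 / (n:ℝ) := by
      refine (min_le_left _ _).trans ?_
      rw [hwi] at c1; simp only [Nat.cast_zero, zero_add] at c1; exact c1.le
    have a5 := a4.trans a3
    nlinarith
  · have k := key i
    have a0 : (1:ℝ) ≤ ((w i : ℕ) : ℝ) := by exact_mod_cast Nat.one_le_iff_ne_zero.2 hwi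
    have a1 : t i ≤ 2 * (((w i : ℕ) : ℝ) / n) := by
      refine c1.le.trans ?_
      rw [← mul_div_assoc]; gcongr; linarith
    have a5 : min (t i) (1 - t i) ≤ 2 * min (((w i : ℕ) : ℝ) / n) (1 - ((w i : ℕ) : ℝ) / n) := by
      rcases min_choice (((w i : ℕ) : ℝ) / n) (1 - ((w i : ℕ) : ℝ) / n) with h | h <;> rw [h]
      · exact (min_le_left _ _).trans a1
      · refine (min_le_right _ _).trans ?_
        linarith
    nlinarith

/-- the cells of the grid -/
def cell (d n : ℕ) (w : Fin d → Fin n) : Set (Fin d → ℝ) :=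
  (Set.univ : Set (Fin d)).pi fun i =>
    Set.Ico (((w i : ℕ) : ℝ) / n) ((((w i : ℕ) : ℝ) + 1) / n)

lemma mem_cell (d n : ℕ) (w : Fin d → Fin n) (t : Fin d → ℝ) : t ∈ cell d n w ↔
    ∀ i, ((w i : ℕ) : ℝ) / n ≤ t i ∧ t i < (((w i : ℕ) : ℝ) + 1) / n := by
  simp [cell, Set.mem_pi]

lemma cell_meas (d n : ℕ) (w : Fin d → Fin n) : MeasurableSet (cell d n w) :=
  MeasurableSet.univ_pi fun _ => measurableSet_Ico

/-- summand, extended by zero -/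
def summand (d n : ℕ) (m2 : ℝ) (w : Fin d → Fin n) : ℝ :=
  if ∃ i, (w i : ℕ) ≠ 0 then 1 / (m2 + eta d n w) else 0

/-- step function -/
def stepFn (d n : ℕ) (m2 : ℝ) (t : Fin d → ℝ) : ℝ :=
  ∑ w : Fin d → Fin n, (cell d n w).indicator (fun _ => summand d n m2 w) t

/-- index of the cell containing a point -/
def idx (d n : ℕ) (hn : 0 < n) (t : Fin d → ℝ) (ht : ∀ i, 0 < t i ∧ t i < 1) : Fin d → Fin n :=
  fun i => ⟨⌊t i * n⌋₊, by
    have hn' : (0:ℝ) < n := by exact_mod_cast hn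
    rw [Nat.floor_lt (by have := (ht i).1; positivity)]
    have := (ht i).2
    nlinarith⟩

lemma mem_cell_iff (d n : ℕ) (hn : 0 < n) (t : Fin d → ℝ) (ht : ∀ i, 0 < t i ∧ t i < 1)
    (w : Fin d → Fin n) : t ∈ cell d n w ↔ w = idx d n hn t ht := by
  have hn' : (0:ℝ) < n := by exact_mod_cast hn
  rw [mem_cell, funext_iff]
  refine forall_congr' fun i => ?_
  have h0 : 0 ≤ t i * n := by have := (ht i).1; positivity
  rw [Fin.ext_iff, div_le_iff₀ hn', lt_div_iff₀ hn']
  simp only [idx]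
  rw [eq_comm, Nat.floor_eq_iff h0]

lemma stepFn_eq (d n : ℕ) (m2 : ℝ) (hn : 0 < n) (t : Fin d → ℝ) (ht : ∀ i, 0 < t i ∧ t i < 1) :
    stepFn d n m2 t = summand d n m2 (idx d n hn t ht) := by
  unfold stepFn
  rw [Finset.sum_eq_single (idx d n hn t ht)]
  · rw [Set.indicator_of_mem]
    exact (mem_cell_iff d n hn t ht _).2 rfl
  · intro w _ hw
    rw [Set.indicator_of_notMem]
    exact fun h => hw ((mem_cell_iff d n hn t ht _).1 h)
  · simp

lemma stepFn_meas (d n : ℕ) (m2 : ℝ) : Measurable (stepFn d n m2) := by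
  unfold stepFn
  exact Finset.measurable_fun_sum _ fun w _ => measurable_const.indicator (cell_meas d n w)

lemma cube_ae (d : ℕ) : ((Set.univ : Set (Fin d)).pi fun _ => Set.Ioo (0 : ℝ) 1) =ᵐ[volume]
    Set.Icc (0 : Fin d → ℝ) 1 :=
  Measure.univ_pi_Ioo_ae_eq_Icc (f := (0 : Fin d → ℝ)) (g := 1)

lemma cell_subset (d n : ℕ) (w : Fin d → Fin n) (hn : 0 < n) :
    cell d n w ⊆ Set.Icc (0 : Fin d → ℝ) 1 := by
  have hn' : (0:ℝ) < n := by exact_mod_cast hn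
  intro t ht
  rw [mem_cell] at ht
  refine ⟨fun i => le_trans (by simp only [Pi.zero_apply]; positivity) (ht i).1,
    fun i => (ht i).2.le.trans ?_⟩
  simp only [Pi.one_apply]
  rw [div_le_one hn']
  exact_mod_cast (w i).2

lemma cell_vol (d n : ℕ) (w : Fin d → Fin n) (hn : 0 < n) :
    volume.real (cell d n w) = 1 / (n:ℝ)^d := by
  have hn' : (0:ℝ) < n := by exact_mod_cast hn
  unfold Measure.real cell
  rw [Real.volume_pi_Ico_toReal]
  · simp only [← sub_div, add_sub_cancel_left]
    simp
  · intro i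
    simp only
    gcongr; linarith

lemma stepFn_integral (d n : ℕ) (m2 : ℝ) (hn : 0 < n) :
    ∫ t in (Set.univ : Set (Fin d)).pi fun _ => Set.Ioo (0 : ℝ) 1, stepFn d n m2 t =
    (1 / (n : ℝ) ^ d) *
        ∑ w ∈ Finset.univ.filter (fun w : Fin d → Fin n => ∃ i, (w i : ℕ) ≠ 0),
          1 / (m2 + eta d n w) := by
  rw [setIntegral_congr_set (cube_ae d)]
  unfold stepFn
  rw [integral_finsetSum, Finset.mul_sum, Finset.sum_filter]
  · refine Finset.sum_congr rfl fun w _ => ?_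
    rw [setIntegral_indicator (cell_meas d n w),
      Set.inter_eq_self_of_subset_right (cell_subset d n w hn), setIntegral_const,
      cell_vol d n w hn, smul_eq_mul, summand]
    split_ifs <;> simp
  · intro w _
    have : IsFiniteMeasure (volume.restrict (Set.Icc (0 : Fin d → ℝ) 1)) :=
      ⟨by simpa using isCompact_Icc.measure_lt_top⟩
    exact (integrable_const _).indicator (cell_meas d n w)

lemma summand_bound (d n : ℕ) (hd : 3 ≤ d) (m2 : ℝ) (hm2 : 0 ≤ m2) (hn : 0 < n)
    (t : Fin d → ℝ) (ht : ∀ i, 0 < t i ∧ t i < 1) :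
    ‖stepFn d n m2 t‖ ≤ ∏ i, hdom d (t i) := by
  rw [stepFn_eq d n m2 hn t ht, summand]
  split_ifs with h
  · have hb := cell_bound d n m2 hm2 _ h t ht
      ((mem_cell d n _ t).1 ((mem_cell_iff d n hn t ht _).2 rfl))
    rw [Real.norm_of_nonneg]
    · exact dom_bound d hd _ t ht hb
    · exact one_div_nonneg.2 ((sq_nonneg _).trans (hb ⟨0, by omega⟩))
  · rw [norm_zero]
    refine Finset.prod_nonneg fun i _ => ?_
    have h0 := (ht i).1
    have h1 : 0 < 1 - t i := by linarith [(ht i).2]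
    unfold hdom
    positivity

lemma min_pos' (t : ℝ) (h : 0 < t ∧ t < 1) : 0 < min t (1 - t) :=
  lt_min h.1 (by linarith [h.2])

lemma stepFn_tendsto (d : ℕ) (hd : 3 ≤ d) (m2 : ℝ) (hm2 : 0 ≤ m2)
    (t : Fin d → ℝ) (ht : ∀ i, 0 < t i ∧ t i < 1) :
    Tendsto (fun n => stepFn d n m2 t) atTop
      (nhds (1 / (m2 + 2 * ∑ i, (1 - Real.cos (2 * Real.pi * t i))))) := by
  have hfl : ∀ i, Tendsto (fun n : ℕ => (⌊t i * n⌋₊ : ℝ) / n) atTop (nhds (t i)) := fun i =>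
    (tendsto_nat_floor_mul_div_atTop (ht i).1.le).comp tendsto_natCast_atTop_atTop
  have hpos : 0 < m2 + 2 * ∑ i, (1 - Real.cos (2 * Real.pi * t i)) := by
    have h := single_le d m2 hm2 t (fun i => ⟨(ht i).1.le, (ht i).2.le⟩) ⟨0, by omega⟩
    have h2 := min_pos' _ (ht ⟨0, by omega⟩)
    exact lt_of_lt_of_le (by positivity) h
  have hlim : Tendsto (fun n : ℕ =>
      1 / (m2 + 2 * ∑ i, (1 - Real.cos (2 * Real.pi * ((⌊t i * n⌋₊ : ℝ) / n))))) atTop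
      (nhds (1 / (m2 + 2 * ∑ i, (1 - Real.cos (2 * Real.pi * t i))))) := by
    refine tendsto_const_nhds.div (tendsto_const_nhds.add (tendsto_const_nhds.mul
      (tendsto_finsetSum _ fun i _ => tendsto_const_nhds.sub ?_))) hpos.ne'
    exact (Real.continuous_cos.tendsto _).comp (tendsto_const_nhds.mul (hfl i))
  refine hlim.congr' ?_
  let i0 : Fin d := ⟨0, by omega⟩
  have hev : ∀ᶠ n : ℕ in atTop, 0 < (⌊t i0 * n⌋₊ : ℝ) / n :=
    (hfl i0).eventually (lt_mem_nhds (ht i0).1)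
  filter_upwards [hev, eventually_gt_atTop 0] with n h1 hn
  rw [stepFn_eq d n m2 hn t ht, summand, if_pos, eta_eq]
  · rfl
  · refine ⟨i0, fun h => ?_⟩
    have h' : ⌊t i0 * n⌋₊ = 0 := h
    rw [h'] at h1
    simp at h1

/-- For `d ≥ 3` and `m² ≥ 0`, the integral
`∫_{(0,1)^d} 1/(m² + 2∑(1 − cos 2πx_k)) dx` is finite, the Riemann sums
`n^{-d} ∑_{x ≠ 0} 1/(m² + η_x)` converge to it as `n → ∞`, and for `m² = 0` the limit
equals `β_c`. -/
theorem riemann_sum_green_tendsto (d : ℕ) (hd : 3 ≤ d) (m2 : ℝ) (hm2 : 0 ≤ m2) :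
    IntegrableOn
      (fun t : Fin d → ℝ => 1 / (m2 + 2 * ∑ i, (1 - Real.cos (2 * Real.pi * t i))))
      ((Set.univ : Set (Fin d)).pi fun _ => Set.Ioo (0 : ℝ) 1) volume ∧
    Tendsto
      (fun n : ℕ => (1 / (n : ℝ) ^ d) *
        ∑ w ∈ Finset.univ.filter (fun w : Fin d → Fin n => ∃ i, (w i : ℕ) ≠ 0),
          1 / (m2 + eta d n w))
      atTop
      (nhds (∫ t in (Set.univ : Set (Fin d)).pi fun _ => Set.Ioo (0 : ℝ) 1,
        1 / (m2 + 2 * ∑ i, (1 - Real.cos (2 * Real.pi * t i))))) ∧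
    (m2 = 0 →
      (∫ t in (Set.univ : Set (Fin d)).pi fun _ => Set.Ioo (0 : ℝ) 1,
        1 / (m2 + 2 * ∑ i, (1 - Real.cos (2 * Real.pi * t i)))) = betaC d) := by
  have hcube : MeasurableSet ((Set.univ : Set (Fin d)).pi fun _ => Set.Ioo (0 : ℝ) 1) :=
    MeasurableSet.univ_pi fun _ => measurableSet_Ioo
  have hmem : ∀ t ∈ ((Set.univ : Set (Fin d)).pi fun _ => Set.Ioo (0 : ℝ) 1),
      ∀ i, 0 < t i ∧ t i < 1 := fun t ht i => ht i (Set.mem_univ i)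
  refine ⟨?_, ?_, ?_⟩
  · refine Integrable.mono' (hdom_prod_int d hd) ?_ ?_
    · apply Measurable.aestronglyMeasurable
      fun_prop
    · refine (ae_restrict_iff' hcube).2 (Eventually.of_forall fun t ht => ?_)
      have ht' := hmem t ht
      have h := single_le d m2 hm2 t (fun i => ⟨(ht' i).1.le, (ht' i).2.le⟩)
      have hb : ∀ i, (min (t i) (1 - t i))^2 ≤
          m2 + 2 * ∑ j, (1 - Real.cos (2 * Real.pi * t j)) := fun i => by
        have := h i
        nlinarith [sq_nonneg (min (t i) (1 - t i))]
      rw [Real.norm_of_nonneg]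
      · exact dom_bound d hd _ t ht' hb
      · exact one_div_nonneg.2 ((sq_nonneg _).trans (hb ⟨0, by omega⟩))
  · have hdc := tendsto_integral_filter_of_dominated_convergence (l := (atTop : Filter ℕ))
      (μ := volume.restrict ((Set.univ : Set (Fin d)).pi fun _ => Set.Ioo (0 : ℝ) 1))
      (F := fun n => stepFn d n m2)
      (f := fun t => 1 / (m2 + 2 * ∑ i, (1 - Real.cos (2 * Real.pi * t i))))
      (fun t : Fin d → ℝ => ∏ i, hdom d (t i))
      (Eventually.of_forall fun n => (stepFn_meas d n m2).aestronglyMeasurable)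
      ((eventually_gt_atTop 0).mono fun n hn => (ae_restrict_iff' hcube).2
        (Eventually.of_forall fun t ht => summand_bound d n hd m2 hm2 hn t (hmem t ht)))
      (hdom_prod_int d hd)
      ((ae_restrict_iff' hcube).2
        (Eventually.of_forall fun t ht => stepFn_tendsto d hd m2 hm2 t (hmem t ht)))
    refine hdc.congr' ?_
    filter_upwards [eventually_gt_atTop 0] with n hn
    exact stepFn_integral d n m2 hn
  · rintro rfl
    rw [setIntegral_congr_set (cube_ae d)]
    simp [betaC, greenZ, massGreenZ]

end
end

section
/- Let d ≥ 3, β > β_c, and for each n ≥ 3 let m_n² be the unique m² > 0 satisfying n^{−d} Σ_{w ∈ {0,…,n−1}^d} 1/(m² + η_w) = β. Then n^d·m_n² → 1/(β − β_c) as n → ∞, and for all x, y ∈ ℤ^d, G_{n,m_n²}(x̄, ȳ) → G_{ℤ^d}(x,y) + (β − β_c) as n → ∞. -/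
open MeasureTheory ProbabilityTheory Filter Topology Matrix
open scoped Classical ENNReal

noncomputable section

/-- The Fourier symbol of the lattice Laplacian. -/
def symE (d : ℕ) (s : Fin d → ℝ) : ℝ := 2 * ∑ i, (1 - Real.cos (2 * Real.pi * s i))

lemma symE_eq (d : ℕ) (s : Fin d → ℝ) : symE d s = 4 * ∑ i, Real.sin (Real.pi * s i) ^ 2 := by
  unfold symE
  rw [Finset.mul_sum, Finset.mul_sum]
  refine Finset.sum_congr rfl fun i _ => ?_
  rw [mul_assoc, Real.cos_two_mul, Real.cos_sq']
  ring

lemma sin_pi_ge {t : ℝ} (h0 : 0 ≤ t) (h1 : t ≤ 1) :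
    2 * t ≤ Real.sin (Real.pi * t) ∨ 2 * (1 - t) ≤ Real.sin (Real.pi * t) := by
  have hp := Real.pi_pos
  rcases le_total t (1/2) with h | h
  · left
    have := Real.mul_le_sin (x := Real.pi * t) (by positivity) (by nlinarith)
    calc 2 * t = 2 / Real.pi * (Real.pi * t) := by field_simp
      _ ≤ _ := this
  · right
    have := Real.mul_le_sin (x := Real.pi * (1 - t)) (mul_nonneg hp.le (by linarith)) (by nlinarith)
    have h2 : Real.sin (Real.pi * (1 - t)) = Real.sin (Real.pi * t) := by
      rw [← Real.sin_pi_sub]; congr 1; ring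
    rw [h2] at this
    calc 2 * (1 - t) = 2 / Real.pi * (Real.pi * (1 - t)) := by field_simp
      _ ≤ _ := this

/-- One-dimensional dominating function. -/
def dom1 (d : ℕ) (t : ℝ) : ℝ := t ^ (-(2 / d : ℝ)) + (1 - t) ^ (-(2 / d : ℝ))

lemma dom1_integrable (d : ℕ) (hd : 3 ≤ d) :
    Integrable (dom1 d) (volume.restrict (Set.Ioo (0:ℝ) 1)) := by
  have hd' : (3:ℝ) ≤ d := by exact_mod_cast hd
  have hr : (-1:ℝ) < -(2 / d : ℝ) := by
    have : (2 / d : ℝ) < 1 := by rw [div_lt_one (by linarith)]; linarith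
    linarith
  have h1 := intervalIntegral.intervalIntegrable_rpow' (a := 0) (b := 1) hr
  have h2 := (intervalIntegral.intervalIntegrable_rpow' (a := 1) (b := 0) hr).comp_sub_left 1
  simp only [sub_self, sub_zero] at h2
  have h3 := h1.add h2
  rw [intervalIntegrable_iff_integrableOn_Ioo_of_le zero_le_one] at h3
  exact h3

lemma dom1_ge (d : ℕ) {t : ℝ} (h0 : 0 < t) (h1 : t < 1) :
    ((Real.sin (Real.pi * t) ^ 2) ^ (1 / d : ℝ))⁻¹ ≤ dom1 d t := by
  have key : ∀ u : ℝ, 0 < u → 2 * u ≤ Real.sin (Real.pi * t) →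
      ((Real.sin (Real.pi * t) ^ 2) ^ (1 / d : ℝ))⁻¹ ≤ u ^ (-(2 / d : ℝ)) := by
    intro u hu h
    rw [Real.rpow_neg hu.le]
    apply inv_anti₀ (by positivity)
    have : u ^ (2 / d : ℝ) = (u ^ 2) ^ (1 / d : ℝ) := by
      rw [← Real.rpow_natCast, ← Real.rpow_mul hu.le]; congr 1; push_cast; ring
    rw [this]
    apply Real.rpow_le_rpow (by positivity) _ (by positivity)
    apply pow_le_pow_left₀ hu.le; linarith
  have hA : 0 ≤ t ^ (-(2 / d : ℝ)) := Real.rpow_nonneg h0.le _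
  have hB : 0 ≤ (1 - t) ^ (-(2 / d : ℝ)) := Real.rpow_nonneg (by linarith) _
  unfold dom1
  rcases sin_pi_ge h0.le h1.le with h | h
  · linarith [key t h0 h]
  · linarith [key (1 - t) (by linarith) h]

lemma sin_pi_pos {t : ℝ} (h0 : 0 < t) (h1 : t < 1) : 0 < Real.sin (Real.pi * t) := by
  rcases sin_pi_ge h0.le h1.le with h | h <;> linarith

lemma symE_pos (d : ℕ) (hd : 3 ≤ d) (t : Fin d → ℝ) (ht : ∀ i, 0 < t i ∧ t i < 1) :
    0 < symE d t := by
  rw [symE_eq]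
  have : Nonempty (Fin d) := ⟨⟨0, by omega⟩⟩
  have : 0 < ∑ i, Real.sin (Real.pi * t i) ^ 2 :=
    Finset.sum_pos (fun i _ => pow_pos (sin_pi_pos (ht i).1 (ht i).2) 2) Finset.univ_nonempty
  linarith

lemma symE_nonneg (d : ℕ) (t : Fin d → ℝ) : 0 ≤ symE d t := by
  rw [symE_eq]; positivity

lemma inv_symE_le (d : ℕ) (hd : 3 ≤ d) (t : Fin d → ℝ) (ht : ∀ i, 0 < t i ∧ t i < 1) :
    (symE d t)⁻¹ ≤ ∏ i, dom1 d (t i) := by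
  have hd' : (3:ℝ) ≤ d := by exact_mod_cast hd
  have h := Real.geom_mean_le_arith_mean_weighted Finset.univ (fun _ : Fin d => (1 / d : ℝ))
    (fun i => Real.sin (Real.pi * t i) ^ 2) (fun _ _ => by positivity)
    (by simp; field_simp) (fun _ _ => by positivity)
  have hpos : ∀ i, 0 < (Real.sin (Real.pi * t i) ^ 2) ^ (1 / d : ℝ) := fun i =>
    Real.rpow_pos_of_pos (pow_pos (sin_pi_pos (ht i).1 (ht i).2) 2) _
  rw [← Finset.mul_sum] at h
  have hS : 0 ≤ ∑ i, Real.sin (Real.pi * t i) ^ 2 := by positivity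
  have h1 : (1 / d : ℝ) ≤ 1 := by rw [div_le_one (by linarith)]; linarith
  have h2 : ∏ i, (Real.sin (Real.pi * t i) ^ 2) ^ (1 / d : ℝ) ≤ symE d t := by
    rw [symE_eq]; nlinarith
  calc (symE d t)⁻¹ ≤ (∏ i, (Real.sin (Real.pi * t i) ^ 2) ^ (1 / d : ℝ))⁻¹ :=
        inv_anti₀ (Finset.prod_pos fun i _ => hpos i) h2
    _ = ∏ i, ((Real.sin (Real.pi * t i) ^ 2) ^ (1 / d : ℝ))⁻¹ := by rw [Finset.prod_inv_distrib]
    _ ≤ _ := Finset.prod_le_prod (fun i _ => (inv_pos.2 (hpos i)).le)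
        fun i _ => dom1_ge d (ht i).1 (ht i).2

lemma dom_integrable (d : ℕ) (hd : 3 ≤ d) :
    Integrable (fun t : Fin d → ℝ => ∏ i, dom1 d (t i))
      (volume.restrict (Set.pi Set.univ fun _ : Fin d => Set.Ioo (0:ℝ) 1)) := by
  rw [volume_pi, Measure.restrict_pi_pi]
  exact Integrable.fintype_prod fun i => dom1_integrable d hd

/-- Comparison of the symbol at `t` and at the lattice point below `t`. -/
lemma symE_floor (d : ℕ) (n : ℕ) (hn : 0 < n) (t : Fin d → ℝ) (v : Fin d → ℕ)
    (hv : ∀ i, v i < n) (hv0 : v ≠ 0) (hvt : ∀ i, (v i : ℝ) / n ≤ t i ∧ t i ≤ (v i : ℝ) / n + 1 / n) :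
    0 < symE d (fun i => (v i : ℝ) / n) ∧
    symE d t ≤ (2 + 8 * d) * symE d (fun i => (v i : ℝ) / n) := by
  have hnR : (0:ℝ) < n := by exact_mod_cast hn
  obtain ⟨j, hj⟩ := Function.ne_iff.1 hv0
  have hj1 : (1:ℝ) ≤ v j := by
    have : 1 ≤ v j := Nat.one_le_iff_ne_zero.2 hj
    exact_mod_cast this
  have hjn : (v j : ℝ) + 1 ≤ n := by exact_mod_cast hv j
  have hs : 2 * (1 / n : ℝ) ≤ Real.sin (Real.pi * ((v j : ℝ) / n)) := by
    have e1 : 1 / (n:ℝ) ≤ v j / n := by gcongr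
    have e2 : 1 / (n:ℝ) ≤ 1 - v j / n := by
      rw [le_sub_iff_add_le, ← add_div, div_le_one hnR]; linarith
    rcases sin_pi_ge (t := (v j : ℝ) / n) (by positivity) (by have : 0 < 1 / (n:ℝ) := by positivity
                                                              linarith) with h | h <;> linarith
  set S := ∑ i, Real.sin (Real.pi * ((v i : ℝ) / n)) ^ 2 with hS
  have hSn : 4 * (1 / n : ℝ) ^ 2 ≤ S := by
    have : Real.sin (Real.pi * ((v j : ℝ) / n)) ^ 2 ≤ S :=
      Finset.single_le_sum (f := fun i => Real.sin (Real.pi * ((v i : ℝ) / n)) ^ 2)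
        (fun i _ => by positivity) (Finset.mem_univ j)
    have : (2 * (1 / n : ℝ)) ^ 2 ≤ Real.sin (Real.pi * ((v j : ℝ) / n)) ^ 2 :=
      pow_le_pow_left₀ (by positivity) hs 2
    linarith
  have hn2 : 0 < (1 / n : ℝ) ^ 2 := by positivity
  rw [symE_eq, symE_eq, ← hS]
  refine ⟨by linarith, ?_⟩
  have hterm : ∀ i, Real.sin (Real.pi * t i) ^ 2 ≤
      2 * Real.sin (Real.pi * ((v i : ℝ) / n)) ^ 2 + 2 * (Real.pi * (1 / n)) ^ 2 := by
    intro i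
    have h1 := Real.abs_sin_sub_sin_le (Real.pi * t i) (Real.pi * ((v i : ℝ) / n))
    have h2 : |Real.pi * t i - Real.pi * ((v i : ℝ) / n)| ≤ Real.pi * (1 / n) := by
      rw [← mul_sub, abs_mul, abs_of_pos Real.pi_pos]
      apply mul_le_mul_of_nonneg_left _ Real.pi_pos.le
      rw [abs_le]; constructor <;> linarith [(hvt i).1, (hvt i).2, show 0 < 1 / (n:ℝ) by positivity]
    have h3 := sq_le_sq' (by linarith [(abs_nonneg (Real.sin (Real.pi * t i) - Real.sin (Real.pi * ((v i : ℝ) / n))))]) (h1.trans h2)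
    rw [sq_abs] at h3
    nlinarith [sq_nonneg (Real.sin (Real.pi * t i) - 2 * Real.sin (Real.pi * ((v i : ℝ) / n)))]
  have hsum := Finset.sum_le_sum (s := Finset.univ) (fun i _ => hterm i)
  rw [Finset.sum_add_distrib, ← Finset.mul_sum, ← hS] at hsum
  simp only [Finset.sum_const, Finset.card_univ, Fintype.card_fin, nsmul_eq_mul] at hsum
  have hpi : Real.pi ^ 2 ≤ 16 := by nlinarith [Real.pi_pos, Real.pi_le_four]
  have : 2 * (Real.pi * (1 / n : ℝ)) ^ 2 ≤ 8 * S := by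
    rw [mul_pow]; nlinarith
  have := mul_le_mul_of_nonneg_left this (Nat.cast_nonneg (α := ℝ) d)
  nlinarith

/-- Riemann sums as integrals of step functions. -/
lemma riemann_sum_eq (d n : ℕ) (hn : 0 < n) (F : (Fin d → ℕ) → ℝ) :
    (1 / (n : ℝ) ^ d) * ∑ w : Fin d → Fin n, F (fun i => (w i : ℕ)) =
      ∫ t in Set.pi Set.univ (fun _ : Fin d => Set.Ico (0:ℝ) 1), F (fun i => ⌊(n:ℝ) * t i⌋₊) := by
  have hnR : (0:ℝ) < n := by exact_mod_cast hn
  let B : (Fin d → Fin n) → Set (Fin d → ℝ) := fun w =>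
    Set.pi Set.univ (fun i => Set.Ico (((w i : ℕ) : ℝ) / n) ((((w i : ℕ) : ℝ) + 1) / n))
  have hB : ∀ w, ∀ t ∈ B w, (fun i => ⌊(n:ℝ) * t i⌋₊) = fun i => (w i : ℕ) := by
    intro w t ht
    funext i
    have := ht i (Set.mem_univ i)
    rw [Set.mem_Ico, div_le_iff₀' hnR, lt_div_iff₀' hnR] at this
    rw [Nat.floor_eq_iff (by have : (0:ℝ) ≤ ((w i : ℕ) : ℝ) := Nat.cast_nonneg _
                             linarith)]
    exact this
  have hU : Set.pi Set.univ (fun _ : Fin d => Set.Ico (0:ℝ) 1) = ⋃ w, B w := by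
    ext t
    rw [Set.mem_iUnion]
    constructor
    · intro ht
      refine ⟨fun i => ⟨⌊(n:ℝ) * t i⌋₊, ?_⟩, ?_⟩
      · have := ht i (Set.mem_univ i)
        rw [Nat.floor_lt (mul_nonneg hnR.le this.1)]
        nlinarith [this.2]
      · intro i _
        have := ht i (Set.mem_univ i)
        rw [Set.mem_Ico, div_le_iff₀' hnR, lt_div_iff₀' hnR]
        exact ⟨Nat.floor_le (mul_nonneg hnR.le this.1), Nat.lt_floor_add_one _⟩
    · rintro ⟨w, hw⟩ i _
      have := hw i (Set.mem_univ i)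
      have h1 : ((w i : ℕ) : ℝ) + 1 ≤ n := by exact_mod_cast (w i).2
      have h0 : (0:ℝ) ≤ ((w i : ℕ) : ℝ) := Nat.cast_nonneg _
      refine ⟨le_trans (by positivity) this.1, this.2.trans_le ?_⟩
      rw [div_le_one hnR]; exact h1
  have hmeas : ∀ w, MeasurableSet (B w) := fun w =>
    MeasurableSet.univ_pi fun i => measurableSet_Ico
  have hdisj : Pairwise (Function.onFun Disjoint B) := by
    intro w w' hne
    refine Set.disjoint_left.2 fun t h1 h2 => hne ?_
    have := (hB w t h1).symm.trans (hB w' t h2)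
    funext i
    exact Fin.ext (congrFun this i)
  have hvol : ∀ w, volume.real (B w) = 1 / (n:ℝ) ^ d := by
    intro w
    have : (fun i => ((w i : ℕ) : ℝ) / n) ≤ fun i => ((((w i : ℕ) : ℝ) + 1) / n) := by
      intro i; dsimp only; gcongr; linarith
    rw [Measure.real, Real.volume_pi_Ico_toReal this]
    have : ∀ i, (((w i : ℕ) : ℝ) + 1) / n - ((w i : ℕ) : ℝ) / n = 1 / n := by intro i; ring
    simp [this]
  have hvol' : ∀ w, volume (B w) ≠ ⊤ := by
    intro w
    rw [Real.volume_pi_Ico]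
    exact ENNReal.prod_ne_top fun i _ => ENNReal.ofReal_ne_top
  rw [hU, integral_iUnion_fintype hmeas hdisj, Finset.mul_sum]
  · refine Finset.sum_congr rfl fun w _ => ?_
    rw [setIntegral_congr_fun (g := fun _ => F (fun i => (w i : ℕ))) (hmeas w)
      (fun t ht => by simp only [hB w t ht]), setIntegral_const, hvol, smul_eq_mul]
  · intro w
    exact (integrableOn_const (hvol' w) (C := F (fun i => (w i : ℕ)))).congr_fun
      (fun t ht => by simp only [hB w t ht]) (hmeas w)

/-- Sum over nonzero modes converges to the lattice integral. -/
lemma key_tendsto (d : ℕ) (hd : 3 ≤ d) (a : Fin d → ℝ) (m : ℕ → ℝ)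
    (hm : ∀ᶠ n in atTop, 0 ≤ m n) (hm0 : Tendsto m atTop (nhds 0)) :
    Tendsto (fun n : ℕ => (1 / (n : ℝ) ^ d) * ∑ w : Fin d → Fin n,
      if (fun i => (w i : ℕ)) = (0 : Fin d → ℕ) then 0 else
      Real.cos (2 * Real.pi * ∑ i, a i * (((w i : ℕ) : ℝ) / n)) /
        (m n + symE d (fun i => ((w i : ℕ) : ℝ) / n))) atTop
      (nhds (∫ t in Set.Icc (0 : Fin d → ℝ) 1,
        Real.cos (2 * Real.pi * ∑ i, a i * t i) / (0 + symE d t))) := by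
  let F : ℕ → (Fin d → ℕ) → ℝ := fun n v => if v = 0 then 0 else
      Real.cos (2 * Real.pi * ∑ i, a i * ((v i : ℝ) / n)) /
        (m n + symE d (fun i => (v i : ℝ) / n))
  have hcube1 : (Set.pi Set.univ (fun _ : Fin d => Set.Ioo (0:ℝ) 1)) =ᵐ[volume]
      Set.Icc (0 : Fin d → ℝ) 1 :=
    Measure.univ_pi_Ioo_ae_eq_Icc (μ := fun _ : Fin d => (volume : Measure ℝ))
      (f := fun _ => 0) (g := fun _ => 1)
  have hcube2 : (Set.pi Set.univ (fun _ : Fin d => Set.Ico (0:ℝ) 1)) =ᵐ[volume]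
      Set.Icc (0 : Fin d → ℝ) 1 :=
    Measure.univ_pi_Ico_ae_eq_Icc (μ := fun _ : Fin d => (volume : Measure ℝ))
      (f := fun _ => 0) (g := fun _ => 1)
  have hQ : MeasurableSet (Set.pi Set.univ (fun _ : Fin d => Set.Ioo (0:ℝ) 1)) :=
    MeasurableSet.univ_pi fun i => measurableSet_Ioo
  have hcontE : Continuous (symE d) := by unfold symE; fun_prop
  rw [← setIntegral_congr_set hcube1]
  have hmain : Tendsto (fun n : ℕ => ∫ t in Set.pi Set.univ (fun _ : Fin d => Set.Ioo (0:ℝ) 1),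
      F n (fun i => ⌊(n:ℝ) * t i⌋₊)) atTop
      (nhds (∫ t in Set.pi Set.univ (fun _ : Fin d => Set.Ioo (0:ℝ) 1),
        Real.cos (2 * Real.pi * ∑ i, a i * t i) / (0 + symE d t))) := by
    refine tendsto_integral_filter_of_dominated_convergence
      (fun t => (2 + 8 * d) * ∏ i, dom1 d (t i)) ?_ ?_ ((dom_integrable d hd).const_mul _) ?_
    · refine Eventually.of_forall fun n => Measurable.aestronglyMeasurable ?_
      have h1 : Measurable (F n) := Measurable.of_discrete
      have h2 : Measurable (fun t : Fin d → ℝ => fun i => ⌊(n:ℝ) * t i⌋₊) :=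
        measurable_pi_lambda _ fun i => Nat.measurable_floor.comp ((measurable_pi_apply i).const_mul _)
      exact h1.comp h2
    · filter_upwards [hm, eventually_gt_atTop 0] with n hmn hn
      filter_upwards [ae_restrict_mem hQ] with t ht
      have ht' : ∀ i, 0 < t i ∧ t i < 1 := fun i => ht i (Set.mem_univ i)
      have hnR : (0:ℝ) < n := by exact_mod_cast hn
      have hpos := symE_pos d hd t ht'
      have hle := inv_symE_le d hd t ht'
      have hprod : 0 ≤ ∏ i, dom1 d (t i) := (inv_pos.2 hpos).le.trans hle
      simp only [F]
      split_ifs with h0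
      · rw [norm_zero]; positivity
      · obtain ⟨e1, e2⟩ := symE_floor d n hn t (fun i => ⌊(n:ℝ) * t i⌋₊)
          (fun i => by rw [Nat.floor_lt (mul_nonneg hnR.le (ht' i).1.le)]; nlinarith [(ht' i).2]) h0
          (fun i => by
            rw [← add_div, div_le_iff₀' hnR, le_div_iff₀' hnR]
            exact ⟨Nat.floor_le (mul_nonneg hnR.le (ht' i).1.le), (Nat.lt_floor_add_one _).le⟩)
        set e := symE d (fun i => (⌊(n:ℝ) * t i⌋₊ : ℝ) / n)
        rw [norm_div, Real.norm_eq_abs, Real.norm_eq_abs, abs_of_pos (by linarith : 0 < m n + e)]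
        calc _ ≤ 1 / e := by
              apply div_le_div₀ zero_le_one (Real.abs_cos_le_one _) e1 (by linarith)
          _ ≤ (2 + 8 * d) * (symE d t)⁻¹ := by
              rw [← div_eq_mul_inv, div_le_div_iff₀ e1 hpos]; linarith
          _ ≤ _ := by gcongr
    · filter_upwards [ae_restrict_mem hQ] with t ht
      have ht' : ∀ i, 0 < t i ∧ t i < 1 := fun i => ht i (Set.mem_univ i)
      have hpos := symE_pos d hd t ht'
      have hlim : ∀ i, Tendsto (fun n : ℕ => (⌊(n:ℝ) * t i⌋₊ : ℝ) / n) atTop (nhds (t i)) := by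
        intro i
        have := (tendsto_nat_floor_mul_div_atTop (ht' i).1.le).comp (tendsto_natCast_atTop_atTop (R := ℝ))
        simpa [Function.comp_def, mul_comm] using this
      have hlim' : Tendsto (fun n : ℕ => fun i => (⌊(n:ℝ) * t i⌋₊ : ℝ) / n) atTop (nhds t) :=
        tendsto_pi_nhds.2 hlim
      have hc : Continuous fun s : Fin d → ℝ => Real.cos (2 * Real.pi * ∑ i, a i * s i) := by fun_prop
      have hT := ((hc.tendsto t).comp hlim').div (hm0.add ((hcontE.tendsto t).comp hlim'))
        (by simpa using hpos.ne')
      refine hT.congr' ?_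
      have j : Fin d := ⟨0, by omega⟩
      filter_upwards [(hlim j).eventually_ne (ht' j).1.ne'] with n hn
      have : (fun i => ⌊(n:ℝ) * t i⌋₊) ≠ 0 := by
        intro h
        have := congrFun h j
        simp only [Pi.zero_apply] at this
        simp [this] at hn
      simp only [F, if_neg this, Function.comp_def, Pi.div_apply]
  refine hmain.congr' ?_
  filter_upwards [eventually_gt_atTop 0] with n hn
  rw [setIntegral_congr_set (hcube1.trans hcube2.symm), ← riemann_sum_eq d n hn (F n)]

lemma split_zero (d n : ℕ) (hn : 0 < n) (f : (Fin d → Fin n) → ℝ) :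
    ∑ w, f w = f (fun _ => ⟨0, hn⟩) +
      ∑ w : Fin d → Fin n, if (fun i => (w i : ℕ)) = (0 : Fin d → ℕ) then 0 else f w := by
  have h : ∀ w : Fin d → Fin n, f w = (if w = (fun _ => ⟨0, hn⟩) then f w else 0) +
      (if (fun i => (w i : ℕ)) = (0 : Fin d → ℕ) then 0 else f w) := by
    intro w
    have : (fun i => (w i : ℕ)) = (0 : Fin d → ℕ) ↔ w = (fun _ => ⟨0, hn⟩) := by
      simp [funext_iff, Fin.ext_iff]
    by_cases hw : w = (fun _ => ⟨0, hn⟩)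
    · rw [if_pos hw, if_pos (this.2 hw), add_zero]
    · rw [if_neg hw, if_neg (this.not.2 hw), zero_add]
  rw [Finset.sum_congr rfl fun w _ => h w, Finset.sum_add_distrib]
  simp

lemma eta_eq_s8 (d n : ℕ) (w : Fin d → Fin n) :
    eta d n w = symE d (fun i => ((w i : ℕ) : ℝ) / n) := by
  simp only [eta, symE, mul_div_assoc]

lemma cos_bridge (d n : ℕ) (hn : 0 < n) (x y : Fin d → ℤ) (w : Fin d → Fin n) :
    Real.cos (2 * Real.pi *
      (∑ i, ((w i : ℕ) : ℝ) * (((x i : ZMod n) - (y i : ZMod n)).val : ℝ)) / n) =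
    Real.cos (2 * Real.pi * ∑ i, ((x i : ℝ) - (y i : ℝ)) * (((w i : ℕ) : ℝ) / n)) := by
  have hnR : (n:ℝ) ≠ 0 := by exact_mod_cast hn.ne'
  haveI : NeZero n := ⟨hn.ne'⟩
  have hk : ∀ i, ∃ k : ℤ, ((((x i : ZMod n) - (y i : ZMod n)).val : ℕ) : ℝ) =
      ((x i : ℝ) - (y i : ℝ)) + n * k := by
    intro i
    have h : ((x i - y i : ℤ) : ZMod n) =
        (((((x i : ZMod n) - (y i : ZMod n)).val : ℕ) : ℤ) : ZMod n) := by
      push_cast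
      rw [ZMod.natCast_zmod_val]
    rw [ZMod.intCast_eq_intCast_iff_dvd_sub] at h
    obtain ⟨k, hk⟩ := h
    refine ⟨k, ?_⟩
    have := congrArg (fun z : ℤ => (z : ℝ)) hk
    push_cast at this
    linarith
  choose k hk using hk
  have : 2 * Real.pi *
      (∑ i, ((w i : ℕ) : ℝ) * (((x i : ZMod n) - (y i : ZMod n)).val : ℝ)) / n =
      2 * Real.pi * ∑ i, ((x i : ℝ) - (y i : ℝ)) * (((w i : ℕ) : ℝ) / n) +
        ((∑ i, (w i : ℕ) * k i : ℤ) : ℝ) * (2 * Real.pi) := by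
    push_cast
    rw [mul_div_assoc, Finset.sum_div, mul_comm _ (2 * Real.pi), ← mul_add,
      ← Finset.sum_add_distrib]
    congr 1
    refine Finset.sum_congr rfl fun i _ => ?_
    rw [hk]
    field_simp
  rw [this, Real.cos_add_int_mul_two_pi]

/-- The sum over the nonzero modes. -/
def nzSum (d n : ℕ) (a : Fin d → ℝ) (m : ℝ) : ℝ :=
  (1 / (n : ℝ) ^ d) * ∑ w : Fin d → Fin n,
      if (fun i => (w i : ℕ)) = (0 : Fin d → ℕ) then 0 else
      Real.cos (2 * Real.pi * ∑ i, a i * (((w i : ℕ) : ℝ) / n)) /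
        (m + symE d (fun i => ((w i : ℕ) : ℝ) / n))

lemma torusGreen_split (d n : ℕ) (hn : 0 < n) (m : ℝ) (x y : Fin d → ℤ) :
    torusGreen d n m (fun i => (x i : ZMod n)) (fun i => (y i : ZMod n)) =
      1 / ((n : ℝ) ^ d * m) + nzSum d n (fun i => (x i : ℝ) - (y i : ℝ)) m := by
  unfold torusGreen nzSum
  rw [split_zero d n hn, mul_add]
  congr 1
  · simp [eta]
    ring
  · congr 1
    refine Finset.sum_congr rfl fun w _ => ?_
    rw [cos_bridge d n hn, eta_eq_s8]

lemma nzSum_tendsto (d : ℕ) (hd : 3 ≤ d) (x y : Fin d → ℤ) (m : ℕ → ℝ)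
    (hm : ∀ᶠ n in atTop, 0 ≤ m n) (hm0 : Tendsto m atTop (nhds 0)) :
    Tendsto (fun n : ℕ => nzSum d n (fun i => (x i : ℝ) - (y i : ℝ)) (m n)) atTop
      (nhds (greenZ d x y)) :=
  key_tendsto d hd (fun i => (x i : ℝ) - (y i : ℝ)) m hm hm0

lemma nzSum_zero_mono (d n : ℕ) (hn : 0 < n) (m : ℝ) (hm : 0 ≤ m) :
    nzSum d n (fun i => (((0 : Fin d → ℤ) i : ℤ) : ℝ) - (((0 : Fin d → ℤ) i : ℤ) : ℝ)) m ≤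
    nzSum d n (fun i => (((0 : Fin d → ℤ) i : ℤ) : ℝ) - (((0 : Fin d → ℤ) i : ℤ) : ℝ)) 0 := by
  have hnR : (0:ℝ) < n := by exact_mod_cast hn
  unfold nzSum
  apply mul_le_mul_of_nonneg_left _ (by positivity)
  refine Finset.sum_le_sum fun w _ => ?_
  split_ifs with h
  · exact le_rfl
  · have hpos := (symE_floor d n hn (fun i => ((w i : ℕ) : ℝ) / n) (fun i => (w i : ℕ))
      (fun i => (w i).2) h (fun i => ⟨le_rfl, by
        have : 0 < 1 / (n:ℝ) := by positivity
        linarith⟩)).1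
    simp only [Pi.zero_apply, Int.cast_zero, sub_self, zero_mul, Finset.sum_const_zero, mul_zero,
      Real.cos_zero]
    apply one_div_le_one_div_of_le <;> linarith

/-- Low-temperature asymptotics of the torus mass and Green's function:
for `d ≥ 3`, `β > β_c`, and `m_n²` the unique positive solution of
`n^{-d} ∑_w 1/(m² + η_w) = β`, one has `n^d m_n² → 1/(β − β_c)` and
`G_{n,m_n²}(x̄,ȳ) → G_{ℤ^d}(x,y) + (β − β_c)` for all `x, y ∈ ℤ^d`. -/
theorem torus_mass_low_temperature_asymptotics
    (d : ℕ) (hd : 3 ≤ d) (β : ℝ) (hβ : betaC d < β) (m2 : ℕ → ℝ)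
    (hm2 : ∀ n : ℕ, 3 ≤ n → 0 < m2 n ∧
      (1 / (n : ℝ) ^ d) * ∑ w : Fin d → Fin n, 1 / (m2 n + eta d n w) = β) :
    Tendsto (fun n : ℕ => (n : ℝ) ^ d * m2 n) atTop (nhds (1 / (β - betaC d))) ∧
    ∀ x y : Fin d → ℤ,
      Tendsto
        (fun n : ℕ => torusGreen d n (m2 n)
          (fun i => (x i : ZMod n)) (fun i => (y i : ZMod n)))
        atTop (nhds (greenZ d x y + (β - betaC d))) := by
  have hb : 0 < β - betaC d := sub_pos.2 hβ
  have hpos : ∀ᶠ n in atTop, 0 < m2 n := by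
    filter_upwards [eventually_ge_atTop 3] with n hn using (hm2 n hn).1
  have heq : ∀ n : ℕ, 3 ≤ n → 1 / ((n : ℝ) ^ d * m2 n) +
      nzSum d n (fun i => (((0 : Fin d → ℤ) i : ℤ) : ℝ) - (((0 : Fin d → ℤ) i : ℤ) : ℝ)) (m2 n)
        = β := by
    intro n hn
    rw [← torusGreen_split d n (by omega), ← (hm2 n hn).2]
    simp [torusGreen]
  have hS0 := nzSum_tendsto d hd 0 0 (fun _ => 0) (Eventually.of_forall fun _ => le_rfl)
    tendsto_const_nhds
  have hnd : Tendsto (fun n : ℕ => (n : ℝ) ^ d) atTop atTop :=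
    (tendsto_pow_atTop (by omega)).comp tendsto_natCast_atTop_atTop
  have hm0 : Tendsto m2 atTop (nhds 0) := by
    have hlt : betaC d < (β + betaC d) / 2 := by linarith
    have hev := hS0.eventually (gt_mem_nhds hlt)
    have hup : Tendsto (fun n : ℕ => (2 / (β - betaC d)) / (n : ℝ) ^ d) atTop (nhds 0) :=
      hnd.const_div_atTop _
    refine tendsto_of_tendsto_of_tendsto_of_le_of_le' tendsto_const_nhds hup
      (hpos.mono fun n h => h.le) ?_
    filter_upwards [hev, eventually_ge_atTop 3] with n h1 hn
    have hm := (hm2 n hn).1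
    have hnp : (0:ℝ) < (n:ℝ) ^ d := by
      have : (0:ℝ) < n := by exact_mod_cast (by omega : 0 < n)
      positivity
    have h2 := nzSum_zero_mono d n (by omega) (m2 n) hm.le
    have h3 := heq n hn
    have h4 : (β - betaC d) / 2 ≤ 1 / ((n : ℝ) ^ d * m2 n) := by linarith
    rw [div_le_div_iff₀ two_pos (by positivity)] at h4
    rw [le_div_iff₀ hnp, le_div_iff₀ hb]
    linarith
  have hinv : Tendsto (fun n : ℕ => 1 / ((n : ℝ) ^ d * m2 n)) atTop (nhds (β - betaC d)) := by
    have := (nzSum_tendsto d hd 0 0 m2 (hpos.mono fun n h => h.le) hm0).const_sub β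
    refine this.congr' ?_
    filter_upwards [eventually_ge_atTop 3] with n hn
    linarith [heq n hn]
  refine ⟨?_, fun x y => ?_⟩
  · have := hinv.inv₀ hb.ne'
    simpa using this
  · rw [add_comm]
    refine (hinv.add (nzSum_tendsto d hd x y m2 (hpos.mono fun n h => h.le) hm0)).congr' ?_
    filter_upwards [eventually_ge_atTop 3] with n hn
    rw [torusGreen_split d n (by omega)]

end
end
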